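/- Let P be a complete metric space and let (A_n) be a sequence of non-empty bounded closed subsets of P that is Cauchy with respect to the Hausdorff distance. Then the set A = ⋂_{n=1}^∞ closure( ⋃_{i=n}^∞ A_i ) is non-empty. -/

import Mathlib

open Metric Set Filter

/-- The Pompeiu–Hausdorff distance between two sets:
`h(A,B) = max { sup_{x ∈ A} ρ(x,B), sup_{y ∈ B} ρ(y,A) }`. -/
noncomputable def hDist {P : Type*} [MetricSpace P] (A B : Set P) : ℝ :=
  max (⨆ x : A, infDist (x : P) B) (⨆ y : B, infDist (y : P) A)

/-
In the space of closed sets, with the uniformity induced by the Hausdorff distance, meeting a given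
open set is an open condition and being empty is a clopen one. Hence a limit of the closures of
the `A n` is contained in every tail closure and is non-empty as soon as the `A n` are; completeness
of the space of closed sets provides such a limit.
-/

open TopologicalSpace Topology

section Limit

variable {ι X : Type*} [UniformSpace X] {A : ι → Set X} {C : Closeds X}

theorem coe_subset_iInter_closure_iUnion_of_tendsto [Preorder ι] [(atTop : Filter ι).NeBot]
    (hC : Tendsto (fun i => Closeds.closure (A i)) atTop (𝓝 C)) :
    (C : Set X) ⊆ ⋂ n, closure (⋃ i ≥ n, A i) := by
  intro x hx
  refine mem_iInter.2 fun n => mem_closure_iff.2 fun U hU hxU => ?_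
  have h_meets : ∀ᶠ i in atTop, (closure (A i) ∩ U).Nonempty :=
    hC.eventually ((Closeds.isOpen_inter_nonempty_of_isOpen hU).mem_nhds ⟨x, hx, hxU⟩)
  obtain ⟨i, hi, hni⟩ := (h_meets.and (eventually_ge_atTop n)).exists
  obtain ⟨y, hyA, hyU⟩ := (closure_inter_open_nonempty_iff hU).1 hi
  exact ⟨y, hyU, mem_iUnion₂.2 ⟨i, hni, hyA⟩⟩

theorem nonempty_of_tendsto_closeds_closure {l : Filter ι} (hne : ∃ᶠ i in l, (A i).Nonempty)
    (hC : Tendsto (fun i => Closeds.closure (A i)) l (𝓝 C)) : (C : Set X).Nonempty := by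
  by_contra hC_empty
  have hC_bot : C ∈ ({⊥} : Set (Closeds X)) :=
    Closeds.ext (not_nonempty_iff_eq_empty.1 hC_empty)
  have h_bot : ∀ᶠ i in l, Closeds.closure (A i) = ⊥ :=
    hC.eventually (Closeds.isClopen_singleton_bot.isOpen.mem_nhds hC_bot)
  obtain ⟨i, ⟨x, hx⟩, hi⟩ := (hne.and_eventually h_bot).exists
  have hx_bot : x ∈ (⊥ : Closeds X) := hi ▸ subset_closure hx
  exact hx_bot

theorem iInter_closure_iUnion_nonempty_general [Preorder ι] [CompleteSpace (Closeds X)]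
    (hne : ∃ᶠ i in atTop, (A i).Nonempty)
    (hCauchy : CauchySeq fun i => Closeds.closure (A i)) :
    (⋂ n, closure (⋃ i ≥ n, A i)).Nonempty := by
  have : (atTop : Filter ι).NeBot := hCauchy.1.of_map
  obtain ⟨C, hC⟩ := cauchySeq_tendsto_of_complete hCauchy
  exact (nonempty_of_tendsto_closeds_closure hne hC).mono
    (coe_subset_iInter_closure_iUnion_of_tendsto hC)

end Limit

section HausdorffDistance

variable {P : Type*} [MetricSpace P] {A B : Set P}

theorem hDist_comm (A B : Set P) : hDist A B = hDist B A :=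
  max_comm _ _

theorem infDist_le_hDist_of_mem (hA : Bornology.IsBounded A) {x : P} (hx : x ∈ A) :
    infDist x B ≤ hDist A B := by
  -- A real supremum is junk unless its range is bounded above.
  have hbdd : BddAbove (range fun a : A => infDist (a : P) B) := by
    rw [← image_eq_range (infDist · B)]
    exact ((lipschitz_infDist_pt B).isBounded_image hA).bddAbove
  exact (le_ciSup hbdd ⟨x, hx⟩).trans (le_max_left _ _)

theorem hausdorffEDist_le_ofReal_hDist (hA : A.Nonempty) (hB : B.Nonempty)
    (hA_bdd : Bornology.IsBounded A) (hB_bdd : Bornology.IsBounded B) :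
    hausdorffEDist A B ≤ ENNReal.ofReal (hDist A B) := by
  refine hausdorffEDist_le_of_infEDist (fun x hx => ?_) fun y hy => ?_
  · rw [← ENNReal.ofReal_toReal (infEDist_ne_top hB)]
    exact ENNReal.ofReal_le_ofReal (infDist_le_hDist_of_mem hA_bdd hx)
  · rw [← ENNReal.ofReal_toReal (infEDist_ne_top hA), hDist_comm]
    exact ENNReal.ofReal_le_ofReal (infDist_le_hDist_of_mem hB_bdd hy)

theorem cauchySeq_closeds_closure_of_hDist {ι : Type*} [Nonempty ι] [SemilatticeSup ι]
    {A : ι → Set P} (hne : ∀ i, (A i).Nonempty) (hbd : ∀ i, Bornology.IsBounded (A i))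
    (hCauchy : ∀ ε > (0 : ℝ), ∃ N, ∀ m ≥ N, ∀ n ≥ N, hDist (A m) (A n) < ε) :
    CauchySeq fun i => Closeds.closure (A i) := by
  refine EMetric.cauchySeq_iff_NNReal.2 fun ε hε => ?_
  obtain ⟨N, hN⟩ := hCauchy ε hε
  refine ⟨N, fun n hn => ?_⟩
  calc
    edist (Closeds.closure (A n)) (Closeds.closure (A N)) = hausdorffEDist (A n) (A N) :=
      hausdorffEDist_closure
    _ ≤ ENNReal.ofReal (hDist (A n) (A N)) :=
      hausdorffEDist_le_ofReal_hDist (hne n) (hne N) (hbd n) (hbd N)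
    _ < ENNReal.ofReal ε := (ENNReal.ofReal_lt_ofReal_iff hε).2 (hN n hn N le_rfl)
    _ = ε := ENNReal.ofReal_coe_nnreal

end HausdorffDistance

/-- For a Cauchy sequence (in the Hausdorff distance) of non-empty bounded closed sets in a
complete metric space, the set `A = ⋂_n closure (⋃_{i ≥ n} A_i)` is non-empty. -/
theorem iInter_closure_iUnion_nonempty {P : Type*} [MetricSpace P] [CompleteSpace P]
    (A : ℕ → Set P)
    (hne : ∀ n, (A n).Nonempty)
    (hbd : ∀ n, Bornology.IsBounded (A n))
    (hcl : ∀ n, IsClosed (A n))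
    (hCauchy : ∀ ε > (0 : ℝ), ∃ N, ∀ m ≥ N, ∀ n ≥ N, hDist (A m) (A n) < ε) :
    (⋂ n : ℕ, closure (⋃ i ≥ n, A i)).Nonempty := by
  exact iInter_closure_iUnion_nonempty_general (Frequently.of_forall hne)
    (cauchySeq_closeds_closure_of_hDist hne hbd hCauchy)
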